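/- arXiv:2211.01661 — 2 statements merged into one kernel-verified Lean document; each statement's English description precedes it below -/
import Mathlib

section
/- For every even integer n ≥ 4, the dimension of the linear span of the set of all pairing matrices equals (n−1)(n−2)/2: dim span{S : S ∈ 𝕊(n)} = (n−1)(n−2)/2. -/
open Finset

def hollowSym {n : ℕ} (C : Matrix (Fin n) (Fin n) ℝ) : Prop :=
  C.IsSymm ∧ ∀ i, C i i = 0

noncomputable def innerH {n : ℕ} (X C : Matrix (Fin n) (Fin n) ℝ) : ℝ :=
  (1 / 2) * ∑ i, ∑ j, X i j * C i j

noncomputable def adjR {n : ℕ} (i : Fin n) : Matrix (Fin n) (Fin n) ℝ :=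
  Matrix.of fun k l => if k ≠ l ∧ (i = k ∨ i = l) then 1 else 0

def IsPairing {n : ℕ} (S : Matrix (Fin n) (Fin n) ℝ) : Prop :=
  S.IsSymm ∧ (∀ i, S i i = 0) ∧ (∀ i j, S i j = 0 ∨ S i j = 1) ∧ (∀ i, ∑ j, S i j = 1)

noncomputable def pairings (n : ℕ) : Finset (Matrix (Fin n) (Fin n) ℝ) :=
  (Finset.univ.filter (fun σ : Equiv.Perm (Fin n) => ∀ i, σ i ≠ i ∧ σ (σ i) = i)).image
    (fun σ => Matrix.of fun i j => if σ i = j then (1 : ℝ) else 0)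

noncomputable def pairSum {n : ℕ} (C : Matrix (Fin n) (Fin n) ℝ) : ℝ :=
  ∑ i, ∑ j ∈ Finset.univ.filter (fun j => i < j), C i j

noncomputable def muEl {n : ℕ} (C : Matrix (Fin n) (Fin n) ℝ) : ℝ :=
  (2 / ((n : ℝ) * ((n : ℝ) - 1))) * pairSum C

noncomputable def Jmat (n : ℕ) : Matrix (Fin n) (Fin n) ℝ := Matrix.of fun _ _ => 1

noncomputable def muSum (n : ℕ) (C : Matrix (Fin n) (Fin n) ℝ) : ℝ :=
  (1 / (Nat.doubleFactorial (n - 1) : ℝ)) * ∑ S ∈ pairings n, innerH S C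

noncomputable def sig2El {n : ℕ} (C : Matrix (Fin n) (Fin n) ℝ) : ℝ :=
  (2 / ((n : ℝ) * ((n : ℝ) - 1))) *
    ∑ i, ∑ j ∈ Finset.univ.filter (fun j => i < j), (C i j - muEl C) ^ 2

noncomputable def sig2Sum (n : ℕ) (C : Matrix (Fin n) (Fin n) ℝ) : ℝ :=
  (1 / (Nat.doubleFactorial (n - 1) : ℝ)) *
    ∑ S ∈ pairings n, (innerH S C - muSum n C) ^ 2

/-!
Every matrix in the span is symmetric with zero diagonal and constant row sums, so it is determined
by its entries below the diagonal and away from the last index `p`, of which there are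
`(n - 1) (n - 2) / 2`. Conversely these entries can be prescribed arbitrarily. Modulo the image of
the span, let `w a b` be the class of the matrix of the edge `ab`; then `w a p = 0`, and `w` sums to
zero over every pairing. Comparing a pairing containing `ab | cd` with the one where these two pairs
are replaced by `ac | bd` gives `w a b + w c d = w a c + w b d`. Taking `d = p` shows that `w` is
constant away from `p`, and the sum over one pairing shows that this constant is zero.
-/

open Equiv

/-- A pairing of the elements of `α`, encoded as the fixed-point-free involution that sends each
element to its partner. -/
structure IsPairingPerm {α : Type*} (σ : Perm α) : Prop where
  involutive : Function.Involutive σ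
  apply_ne : ∀ i, σ i ≠ i

namespace IsPairingPerm

variable {α : Type*} {σ : Perm α}

theorem apply_eq_iff (hσ : IsPairingPerm σ) {i j : α} : σ i = j ↔ i = σ j :=
  hσ.involutive.eq_iff

theorem inv_eq_self (hσ : IsPairingPerm σ) : σ⁻¹ = σ :=
  Function.Involutive.symm_eq_self_of_involutive σ hσ.involutive

theorem conj (hσ : IsPairingPerm σ) (g : Perm α) : IsPairingPerm (g * σ * g⁻¹) where
  involutive i := by simp [hσ.involutive _]
  apply_ne i h := hσ.apply_ne (g⁻¹ i) (by simpa [← Perm.eq_inv_iff_eq] using h)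

theorem conj_swap_apply [DecidableEq α] (hσ : IsPairingPerm σ) {a b : α} (hab : a ≠ b) :
    (swap (σ a) b * σ * (swap (σ a) b)⁻¹) a = b := by
  simp [swap_apply_of_ne_of_ne (hσ.apply_ne a).symm hab]

end IsPairingPerm

section Pairings

variable {α : Type*} [Fintype α]

theorem exists_isPairingPerm (hα : Even (Fintype.card α)) : ∃ σ : Perm α, IsPairingPerm σ := by
  obtain ⟨k, hk⟩ := hα
  let e : α ≃ Fin k ⊕ Fin k := Fintype.equivOfCardEq (by simpa using hk)
  refine ⟨e.trans ((sumComm _ _).trans e.symm), fun i ↦ by simp, fun i h ↦ ?_⟩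
  have hswap : (e i).swap = e i := by simpa [symm_apply_eq] using h
  cases hi : e i <;> simp [hi] at hswap

theorem exists_isPairingPerm_apply_eq (hα : Even (Fintype.card α)) {a b c d : α}
    (habcd : [a, b, c, d].Nodup) :
    ∃ σ : Perm α, IsPairingPerm σ ∧ σ a = b ∧ σ c = d := by
  classical
  obtain ⟨⟨hab, hac, had⟩, ⟨hbc, hbd⟩, hcd⟩ :
      (a ≠ b ∧ a ≠ c ∧ a ≠ d) ∧ (b ≠ c ∧ b ≠ d) ∧ c ≠ d := by simpa using habcd
  obtain ⟨ρ, hρ⟩ := exists_isPairingPerm hα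
  obtain ⟨τ, hτ, rfl⟩ : ∃ τ : Perm α, IsPairingPerm τ ∧ τ a = b :=
    ⟨_, hρ.conj _, hρ.conj_swap_apply hab⟩
  refine ⟨_, hτ.conj (swap (τ c) d), ?_, hτ.conj_swap_apply hcd⟩
  have hac' : a ≠ τ c := fun h ↦ hbc (hτ.apply_eq_iff.2 h)
  simp [swap_apply_of_ne_of_ne hac' had, swap_apply_of_ne_of_ne (τ.injective.ne hac) hbd]

end Pairings

section Weights

/-- The weight `w` on pairs of elements of `α` gives total weight zero to every pairing. In the
sum each pair `ab` of the pairing contributes both `w a b` and `w b a`. -/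
def PairingSumsVanish {α M : Type*} [Fintype α] [AddCommMonoid M] (w : α → α → M) : Prop :=
  ∀ σ : Perm α, IsPairingPerm σ → ∑ i, w i (σ i) = 0

variable {α M : Type*} [Fintype α] [AddCommGroup M] [IsAddTorsionFree M]
  {w : α → α → M}

-- Conjugating a pairing containing `ab | cd` by `swap b c` only changes these two pairs,
-- into `ac | bd`.
theorem PairingSumsVanish.exchange (hw : PairingSumsVanish w) (hsymm : ∀ a b, w a b = w b a)
    (hα : Even (Fintype.card α)) {a b c d : α} (habcd : [a, b, c, d].Nodup) :
    w a b + w c d = w a c + w b d := by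
  classical
  obtain ⟨⟨hab, hac, had⟩, ⟨hbc, hbd⟩, hcd⟩ :
      (a ≠ b ∧ a ≠ c ∧ a ≠ d) ∧ (b ≠ c ∧ b ≠ d) ∧ c ≠ d := by simpa using habcd
  obtain ⟨σ, hσ, hσa, hσc⟩ := exists_isPairingPerm_apply_eq hα habcd
  have hσb : σ b = a := hσ.apply_eq_iff.2 hσa.symm
  have hσd : σ d = c := hσ.apply_eq_iff.2 hσc.symm
  let s := swap b c
  have hsa : s a = a := swap_apply_of_ne_of_ne hab hac
  have hsb : s b = c := swap_apply_left b c
  have hsc : s c = b := swap_apply_right b c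
  have hsd : s d = d := swap_apply_of_ne_of_ne hbd.symm hcd.symm
  have hdiff : ∑ i, (w i (σ i) - w (s i) (s (σ i))) = 0 := by
    have hreindex : ∑ i, w (s i) (s (σ i)) = ∑ i, w i ((s * σ * s⁻¹) i) :=
      Fintype.sum_equiv s _ _ fun i ↦ by simp
    rw [sum_sub_distrib, hreindex, hw σ hσ, hw _ (hσ.conj s), sub_zero]
  have hsupport : ∀ i ∉ ({a, b, c, d} : Finset α), w i (σ i) - w (s i) (s (σ i)) = 0 := by
    intro i hi
    obtain ⟨hia, hib, hic, hid⟩ : i ≠ a ∧ i ≠ b ∧ i ≠ c ∧ i ≠ d := by simpa using hi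
    have hσib : σ i ≠ b := fun h ↦ hia (by rw [hσ.apply_eq_iff.1 h, hσb])
    have hσic : σ i ≠ c := fun h ↦ hid (by rw [hσ.apply_eq_iff.1 h, hσc])
    have hsi : s i = i := swap_apply_of_ne_of_ne hib hic
    have hsσi : s (σ i) = σ i := swap_apply_of_ne_of_ne hσib hσic
    rw [hsi, hsσi, sub_self]
  have htwice : 2 • (w a b + w c d - (w a c + w b d)) = 0 := by
    rw [← sum_subset (subset_univ {a, b, c, d}) fun i _ hi ↦ hsupport i hi] at hdiff
    simp only [sum_insert, sum_singleton, mem_insert, mem_singleton, hab, hac, had, hbc, hbd, hcd,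
      or_self, not_false_eq_true, hσa, hσb, hσc, hσd, hsa, hsb, hsc, hsd, hsymm b a,
      hsymm c a, hsymm d c, hsymm d b] at hdiff
    rw [← hdiff]
    abel
  exact sub_eq_zero.1 ((nsmul_eq_zero_iff_right two_ne_zero).1 htwice)

theorem PairingSumsVanish.eq_of_ne (hw : PairingSumsVanish w) (hsymm : ∀ a b, w a b = w b a)
    (hα : Even (Fintype.card α)) {p : α} (hp : ∀ a, w a p = 0) {a b x y : α} (hab : a ≠ b)
    (hap : a ≠ p) (hbp : b ≠ p) (hxy : x ≠ y) (hxp : x ≠ p) (hyp : y ≠ p) :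
    w a b = w x y := by
  have hrow : ∀ {u v z : α}, u ≠ v → u ≠ z → u ≠ p → v ≠ p → z ≠ p → w u v = w u z := by
    intro u v z huv huz hup hvp hzp
    obtain rfl | hvz := eq_or_ne v z
    · rfl
    · simpa [hp] using hw.exchange hsymm hα (a := u) (b := v) (c := z) (d := p) (by simp [*])
  obtain rfl | hax := eq_or_ne a x
  · exact hrow hab hxy hap hbp hyp
  · calc w a b = w a x := hrow hab hax hap hbp hxp
      _ = w x a := hsymm a x
      _ = w x y := hrow hax.symm hxy hxp hap hyp

theorem PairingSumsVanish.eq_zero (hw : PairingSumsVanish w) (hsymm : ∀ a b, w a b = w b a)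
    (hα : Even (Fintype.card α)) (hcard : 2 < Fintype.card α) {p : α} (hp : ∀ a, w a p = 0)
    {a b : α} (hab : a ≠ b) : w a b = 0 := by
  classical
  obtain rfl | hap := eq_or_ne a p
  · rw [hsymm, hp]
  obtain rfl | hbp := eq_or_ne b p
  · exact hp a
  obtain ⟨σ, hσ⟩ := exists_isPairingPerm hα
  have hterm : ∀ i, w i (σ i) = if i ∈ ({p, σ p} : Finset α)ᶜ then w a b else 0 := by
    intro i
    split_ifs with hi
    · obtain ⟨hip, hiσp⟩ : i ≠ p ∧ i ≠ σ p := by simpa using hi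
      exact hw.eq_of_ne hsymm hα hp (hσ.apply_ne i).symm hip
        (fun h ↦ hiσp (hσ.apply_eq_iff.1 h)) hab hap hbp
    · obtain rfl | rfl : i = p ∨ i = σ p := by simpa [or_iff_not_imp_left] using hi
      · rw [hsymm, hp]
      · rw [hσ.involutive, hp]
  have hsum : #({p, σ p} : Finset α)ᶜ • w a b = 0 := by
    simpa only [hterm, sum_ite_mem, univ_inter, sum_const] using hw σ hσ
  refine (nsmul_eq_zero_iff_right ?_).1 hsum
  rw [card_compl, card_pair (hσ.apply_ne p).symm]
  omega

end Weights

section Matrices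

variable {α R : Type*} [DecidableEq α]

theorem isPairing_permMatrix {n : ℕ} {σ : Perm (Fin n)} (hσ : IsPairingPerm σ) :
    IsPairing (σ.permMatrix ℝ) := by
  refine ⟨?_, fun i ↦ ?_, fun i j ↦ ?_, fun i ↦ ?_⟩
  · rw [Matrix.IsSymm, Matrix.transpose_permMatrix, hσ.inv_eq_self]
  · simp [PEquiv.toMatrix_apply, hσ.apply_ne i]
  · simp only [PEquiv.toMatrix_apply]
    exact (ite_eq_or_eq _ _ _).symm
  · simp [PEquiv.toMatrix_apply]

/-- The adjacency matrix of the graph with the single edge `ab`, for `a ≠ b`. -/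
def edgeMatrix (R : Type*) [AddMonoidWithOne R] (a b : α) : Matrix α α R :=
  Matrix.single a b 1 + Matrix.single b a 1

variable [AddCommMonoidWithOne R]

theorem edgeMatrix_comm (a b : α) : edgeMatrix R a b = edgeMatrix R b a :=
  add_comm _ _

theorem sum_single_one_eq_permMatrix [Fintype α] (σ : Perm α) :
    ∑ i, Matrix.single i (σ i) (1 : R) = σ.permMatrix R := by
  ext k l
  simp [Matrix.sum_apply, Matrix.single_apply, PEquiv.toMatrix_apply, ite_and, eq_comm]

theorem IsPairingPerm.sum_edgeMatrix [Fintype α] {σ : Perm α} (hσ : IsPairingPerm σ) :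
    ∑ i, edgeMatrix R i (σ i) = 2 • σ.permMatrix R := by
  have hflip : ∑ i, Matrix.single (σ i) i (1 : R) = σ.permMatrix R := by
    rw [← sum_single_one_eq_permMatrix]
    exact Fintype.sum_equiv σ _ _ fun i ↦ by rw [hσ.involutive]
  simp only [edgeMatrix, sum_add_distrib, sum_single_one_eq_permMatrix, hflip, two_nsmul]

end Matrices

section LowerEntries

/-- The positions strictly below the diagonal of an `m × m` matrix. -/
abbrev LowerPosition (m : ℕ) := {p : Fin m × Fin m // p.2 < p.1}

theorem card_lowerPosition (m : ℕ) : Fintype.card (LowerPosition m) = m * (m - 1) / 2 := by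
  rw [Fintype.card_congr (subtypeProdEquivSigmaSubtype fun i j : Fin m ↦ j < i),
    Fintype.card_sigma, ← sum_range_id, ← Fin.sum_univ_eq_sum_range (fun i ↦ i) m]
  simp [Fintype.card_subtype, filter_gt_eq_Iio]

variable {R : Type*} {m : ℕ}

/-- The entries of a square matrix strictly below the diagonal and not in the last row. For
symmetric matrices these are the entries off the diagonal and away from the last index. -/
def lowerEntries (R : Type*) [Semiring R] (m : ℕ) :
    Matrix (Fin (m + 1)) (Fin (m + 1)) R →ₗ[R] (LowerPosition m → R) where
  toFun X p := X p.1.1.castSucc p.1.2.castSucc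
  map_add' _ _ := rfl
  map_smul' _ _ := rfl

theorem lowerEntries_apply [Semiring R] (X : Matrix (Fin (m + 1)) (Fin (m + 1)) R)
    (p : LowerPosition m) : lowerEntries R m X p = X p.1.1.castSucc p.1.2.castSucc :=
  rfl

theorem lowerEntries_edgeMatrix_last [Semiring R] (a : Fin (m + 1)) :
    lowerEntries R m (edgeMatrix R a (Fin.last m)) = 0 := by
  ext p
  simp [lowerEntries_apply, edgeMatrix, (Fin.castSucc_ne_last _).symm]

theorem lowerEntries_edgeMatrix_castSucc [Semiring R] (p : LowerPosition m) :
    lowerEntries R m (edgeMatrix R p.1.1.castSucc p.1.2.castSucc) = Pi.single p 1 := by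
  ext q
  have hflip : ¬(p.1.2 = q.1.1 ∧ p.1.1 = q.1.2) := fun h ↦
    lt_asymm p.2 (h.1 ▸ h.2 ▸ q.2)
  simp [lowerEntries_apply, edgeMatrix, Matrix.single_apply, Pi.single_apply, hflip,
    eq_comm (a := q), Subtype.ext_iff, Prod.ext_iff]

/-- The symmetric matrices with zero diagonal whose row sums are all equal. -/
def hollowEqualRowSums (R α : Type*) [Semiring R] [Fintype α] : Submodule R (Matrix α α R) where
  carrier := {X | X.IsSymm ∧ (∀ i, X i i = 0) ∧ ∃ c, ∀ i, ∑ j, X i j = c}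
  zero_mem' := ⟨Matrix.isSymm_zero, by simp, 0, by simp⟩
  add_mem' := by
    rintro X Y ⟨hX, hX₀, c, hc⟩ ⟨hY, hY₀, d, hd⟩
    exact ⟨hX.add hY, by simp [hX₀, hY₀], c + d, by simp [sum_add_distrib, hc, hd]⟩
  smul_mem' := by
    rintro r X ⟨hX, hX₀, c, hc⟩
    exact ⟨hX.smul r, by simp [hX₀], r * c, by simp [← mul_sum, hc]⟩

theorem span_isPairing_le (n : ℕ) :
    Submodule.span ℝ {S : Matrix (Fin n) (Fin n) ℝ | IsPairing S} ≤
      hollowEqualRowSums ℝ (Fin n) :=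
  Submodule.span_le.2 fun _ hS ↦ ⟨hS.1, hS.2.1, 1, hS.2.2.2⟩

-- If the entries away from the last index vanish, then the common row sum `c` is the last entry
-- of every other row, and the last row gives `m * c = c`.
theorem disjoint_hollowEqualRowSums_ker_lowerEntries [Ring R] [CharZero R] [NoZeroDivisors R]
    (hm : m ≠ 1) :
    Disjoint (hollowEqualRowSums R (Fin (m + 1))) (LinearMap.ker (lowerEntries R m)) := by
  rw [LinearMap.disjoint_ker]
  rintro X ⟨hsymm, hdiag, c, hrow⟩ hX
  have hminor : ∀ i j : Fin m, X i.castSucc j.castSucc = 0 := by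
    intro i j
    rcases lt_trichotomy i j with hij | rfl | hij
    · exact (hsymm.apply _ _).trans (congrFun hX ⟨(j, i), hij⟩)
    · exact hdiag _
    · exact congrFun hX ⟨(i, j), hij⟩
  have hlast : ∀ i : Fin m, X i.castSucc (Fin.last m) = c := fun i ↦ by
    simpa [Fin.sum_univ_castSucc, hminor] using hrow i.castSucc
  have hc : c = 0 := by
    have hlastrow : (m : R) * c = c := by
      simpa [Fin.sum_univ_castSucc, hsymm.apply _ (Fin.last m), hlast, hdiag] using
        hrow (Fin.last m)
    exact (mul_left_eq_self₀.1 hlastrow).resolve_left (by exact_mod_cast hm)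
  ext i j
  cases i using Fin.lastCases with
  | last =>
    cases j using Fin.lastCases with
    | last => exact hdiag _
    | cast j => exact (hsymm.apply _ _).trans ((hlast j).trans hc)
  | cast i =>
    cases j using Fin.lastCases with
    | last => exact (hlast i).trans hc
    | cast j => exact hminor i j

theorem map_lowerEntries_span_isPairing (he : Even (m + 1)) :
    (Submodule.span ℝ {S : Matrix (Fin (m + 1)) (Fin (m + 1)) ℝ | IsPairing S}).map
      (lowerEntries ℝ m) = ⊤ := by
  set E := (Submodule.span ℝ {S : Matrix (Fin (m + 1)) (Fin (m + 1)) ℝ | IsPairing S}).map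
    (lowerEntries ℝ m)
  have : IsAddTorsionFree ((LowerPosition m → ℝ) ⧸ E) := .of_isTorsionFree ℝ _
  let φ := E.mkQ ∘ₗ lowerEntries ℝ m
  have hφ : PairingSumsVanish fun a b ↦ φ (edgeMatrix ℝ a b) := by
    intro σ hσ
    have hE : lowerEntries ℝ m (σ.permMatrix ℝ) ∈ E :=
      Submodule.mem_map_of_mem (Submodule.subset_span (isPairing_permMatrix hσ))
    rw [← map_sum, hσ.sum_edgeMatrix, map_nsmul]
    simp [φ, (Submodule.Quotient.mk_eq_zero E).2 hE]
  rw [← top_le_iff, ← (Pi.basisFun ℝ (LowerPosition m)).span_eq, Submodule.span_le]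
  rintro _ ⟨p, rfl⟩
  rw [SetLike.mem_coe, ← Submodule.Quotient.mk_eq_zero, Pi.basisFun_apply,
    ← lowerEntries_edgeMatrix_castSucc]
  have hm : 2 < Fintype.card (Fin (m + 1)) := by
    have := p.2
    rw [Fintype.card_fin]
    omega
  exact hφ.eq_zero (fun a b ↦ by rw [edgeMatrix_comm]) (by simpa using he) hm (p := Fin.last m)
    (fun a ↦ by simp [φ, lowerEntries_edgeMatrix_last]) ((Fin.castSucc_injective m).ne p.2.ne')

end LowerEntries

theorem stmt3 (n : ℕ) (hn : 4 ≤ n) (he : Even n) :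
    Module.finrank ℝ (Submodule.span ℝ {S : Matrix (Fin n) (Fin n) ℝ | IsPairing S})
      = (n - 1) * (n - 2) / 2 := by
  obtain ⟨m, rfl⟩ : ∃ m, n = m + 1 := ⟨n - 1, by omega⟩
  set W := Submodule.span ℝ {S : Matrix (Fin (m + 1)) (Fin (m + 1)) ℝ | IsPairing S}
  have hinj : Function.Injective ((lowerEntries ℝ m).domRestrict W) :=
    LinearMap.injective_domRestrict_iff.2 <|
      (disjoint_hollowEqualRowSums_ker_lowerEntries (by omega)).mono_left (span_isPairing_le _)
  calc Module.finrank ℝ W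
      = Module.finrank ℝ (W.map (lowerEntries ℝ m)) := by
        rw [← LinearMap.finrank_range_of_inj hinj, LinearMap.range_domRestrict]
    _ = Fintype.card (LowerPosition m) := by
        rw [map_lowerEntries_span_isPairing he, finrank_top,
          Module.finrank_fintype_fun_eq_card]
    _ = m * (m - 1) / 2 := card_lowerPosition m
end

section
/- Let n be an even integer with n ≥ 4 and let A, B ∈ Ω_n. Then ⟨S,A⟩ = ⟨S,B⟩ for every pairing matrix S ∈ 𝕊(n) (i.e., A ~ B) if and only if for every pair of indices 1 ≤ i < j ≤ n, A_{i,j} − (⟨R_i,A⟩ + ⟨R_j,A⟩)/(n−2) = B_{i,j} − (⟨R_i,B⟩ + ⟨R_j,B⟩)/(n−2). -/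
open Finset

/-!
By linearity the statement concerns `C = A - B`, and both sides say that `C` has off-diagonal
entries `u i + u j` for some vector `u` with `∑ i, u i = 0`.

If `C` is orthogonal to all pairing matrices, comparing two pairings that differ only on
`{a, b, c, d}` gives `C a b + C c d = C a c + C b d`. Taking `d` to be a base point `p`, the
quantity `C a b - C a p - C b p` is a constant `κ`, so `u a = C a p + κ / 2` for `a ≠ p` and
`u p = -κ / 2` works; conversely `⟨S, C⟩ = ∑ i, u i` for every pairing matrix `S`. On the other
side, `⟨R i, C⟩ = (n - 2) * u i + ∑ j, u j` for such a `C`, so `u` is `⟨R i, C⟩ / (n - 2)` when its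
sum vanishes.
-/

/-- A fixed-point-free involution, the permutation underlying a pairing matrix. -/
def IsFixedPointFreeInvolution {ι : Type*} (σ : Equiv.Perm ι) : Prop :=
  Function.Involutive σ ∧ ∀ i, σ i ≠ i

/-- The condition that for distinct `a, b, c, d` the pairings `{ab, cd}` and `{ac, bd}` of these
four indices have equal weight under `C`; it is what vanishing on all pairings yields locally. -/
def IsQuadrupleBalanced {ι R : Type*} [Add R] (C : Matrix ι ι R) : Prop :=
  ∀ ⦃a b c d⦄, [a, b, c, d].Nodup → C a b + C c d = C a c + C b d

/-- `u` is a potential of `C` if `C` agrees with `∑ i, u i • R i` off the diagonal, where `R i` are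
the adjacent set matrices. The diagonal is unconstrained because pairing matrices do not see it. -/
def IsPotential {ι R : Type*} [Add R] (C : Matrix ι ι R) (u : ι → R) : Prop :=
  Pairwise fun i j => C i j = u i + u j

namespace IsFixedPointFreeInvolution

variable {ι κ : Type*} {σ : Equiv.Perm ι}

theorem permCongr (hσ : IsFixedPointFreeInvolution σ) (e : ι ≃ κ) :
    IsFixedPointFreeInvolution (e.permCongr σ) :=
  ⟨fun i => by simp [hσ.1 (e.symm i)],
    fun i h => hσ.2 (e.symm i) (e.eq_symm_apply.2 h)⟩

theorem exists_of_even_card [Fintype ι] (h : Even (Fintype.card ι)) :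
    ∃ σ : Equiv.Perm ι, IsFixedPointFreeInvolution σ := by
  have rev : IsFixedPointFreeInvolution (Fin.revPerm (n := Fintype.card ι)) := by
    refine ⟨Fin.rev_rev, fun i hi => ?_⟩
    have hval : Fintype.card ι - (i + 1) = i := congrArg Fin.val hi
    grind
  exact ⟨_, rev.permCongr (Fintype.equivFin ι).symm⟩

theorem permCongr_swap_apply_self [DecidableEq ι] (hσ : IsFixedPointFreeInvolution σ) {a b : ι}
    (hab : a ≠ b) :
    (Equiv.swap (σ a) b).permCongr σ a = b := by
  simp [Equiv.swap_apply_of_ne_of_ne (hσ.2 a).symm hab]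

theorem exists_apply_eq_apply_eq [Fintype ι] (h : Even (Fintype.card ι)) {a b c d : ι}
    (hd : [a, b, c, d].Nodup) :
    ∃ σ : Equiv.Perm ι, IsFixedPointFreeInvolution σ ∧ σ a = b ∧ σ c = d := by
  classical
  simp only [List.nodup_cons, List.mem_cons, List.not_mem_nil, not_or] at hd
  obtain ⟨⟨hab, hac, had, -⟩, ⟨hbc, hbd, -⟩, ⟨hcd, -⟩, -⟩ := hd
  obtain ⟨ρ, hρ⟩ := exists_of_even_card h
  obtain ⟨τ, hτ, τa⟩ : ∃ τ : Equiv.Perm ι, IsFixedPointFreeInvolution τ ∧ τ a = b :=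
    ⟨_, hρ.permCongr _, hρ.permCongr_swap_apply_self hab⟩
  have hτc_b : b ≠ τ c := τa ▸ τ.injective.ne hac
  have hτc_a : a ≠ τ c := fun h => hbc (by rw [← τa, h, hτ.1 c])
  refine ⟨_, hτ.permCongr (Equiv.swap (τ c) d), ?_, hτ.permCongr_swap_apply_self hcd⟩
  simp [Equiv.swap_apply_of_ne_of_ne hτc_a had, τa, Equiv.swap_apply_of_ne_of_ne hτc_b hbd]

theorem sum_apply_sub_sum_permCongr_swap_apply [Fintype ι] [DecidableEq ι] {R : Type*}
    [CommRing R] {C : Matrix ι ι R} (hσ : IsFixedPointFreeInvolution σ) (hC : C.IsSymm) {a c : ι}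
    (hac : a ≠ c) (hσac : σ a ≠ c) :
    ∑ i, C i (σ i) - ∑ i, C i ((Equiv.swap (σ a) c).permCongr σ i) =
      2 * (C a (σ a) + C c (σ c) - (C a c + C (σ a) (σ c))) := by
  set g := Equiv.swap (σ a) c with hg
  have haσc : a ≠ σ c := fun h => hσac (by rw [h, hσ.1 c])
  have hσaσc : σ a ≠ σ c := σ.injective.ne hac
  have reindex : ∑ i, C i (g.permCongr σ i) = ∑ i, C (g i) (g (σ i)) := by
    rw [← Equiv.sum_comp g]
    simp
  have off_support : ∀ i ∉ ({a, σ a, c, σ c} : Finset ι),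
      C i (σ i) - C (g i) (g (σ i)) = 0 := by
    intro i hi
    simp only [mem_insert, mem_singleton, not_or] at hi
    obtain ⟨hia, hiσa, hic, hiσc⟩ := hi
    have hσic : σ i ≠ c := fun h => hiσc (by rw [← h, hσ.1 i])
    rw [hg, Equiv.swap_apply_of_ne_of_ne hiσa hic,
      Equiv.swap_apply_of_ne_of_ne (σ.injective.ne hia) hσic, sub_self]
  have ga : g a = a := Equiv.swap_apply_of_ne_of_ne (hσ.2 a).symm hac
  have gσc : g (σ c) = σ c := Equiv.swap_apply_of_ne_of_ne hσaσc.symm (hσ.2 c)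
  have gσa : g (σ a) = c := Equiv.swap_apply_left _ _
  have gc : g c = σ a := Equiv.swap_apply_right _ _
  rw [reindex, ← sum_sub_distrib, ← sum_subset (subset_univ _) fun i _ => off_support i,
    sum_insert (by simp [(hσ.2 a).symm, hac, haσc]), sum_insert (by simp [hσac, hσaσc]),
    sum_insert (by simp [(hσ.2 c).symm]), sum_singleton]
  simp only [hσ.1 a, hσ.1 c, ga, gσa, gc, gσc]
  linear_combination hC.apply a (σ a) - hC.apply a c + hC.apply c (σ c) - hC.apply (σ a) (σ c)

theorem isPairing_permMatrix {n : ℕ} {σ : Equiv.Perm (Fin n)}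
    (hσ : IsFixedPointFreeInvolution σ) : IsPairing (σ.permMatrix ℝ) := by
  have entry : ∀ i j, σ.permMatrix ℝ i j = if σ i = j then 1 else 0 := fun i j => by
    simp [Equiv.Perm.permMatrix, PEquiv.toMatrix_apply]
  refine ⟨Matrix.IsSymm.ext fun i j => ?_, fun i => ?_, fun i j => ?_, fun i => ?_⟩
  · simp only [entry, hσ.1.eq_iff, @eq_comm _ i]
  · simp [hσ.2 i]
  · rw [entry]
    exact (ite_eq_or_eq _ _ _).symm
  · simp

end IsFixedPointFreeInvolution

section Potential

variable {ι : Type*}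

theorem exists_pairwise_eq_of_symm {α : Type*} [Nonempty α] {f : ι → ι → α}
    (symm : ∀ a b, f a b = f b a) (row : ∀ a b c, [a, b, c].Nodup → f a b = f a c) :
    ∃ κ, Pairwise fun a b => f a b = κ := by
  have row_eq : ∀ a b c, a ≠ b → a ≠ c → f a b = f a c := fun a b c hab hac => by
    rcases eq_or_ne b c with rfl | hbc
    · rfl
    · exact row a b c (by simp [hab, hac, hbc])
  rcases subsingleton_or_nontrivial ι with _ | _
  · exact ⟨Classical.arbitrary α, fun a b hab => absurd (Subsingleton.elim a b) hab⟩
  obtain ⟨a, b, hab⟩ := exists_pair_ne ι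
  refine ⟨f a b, fun c d hcd => ?_⟩
  rcases eq_or_ne c a with rfl | hca
  · exact row_eq c d b hcd hab
  · calc f c d = f c a := row_eq c d a hcd hca
      _ = f a c := symm c a
      _ = f a b := row_eq a c b hca.symm hab

theorem IsQuadrupleBalanced.exists_isPotential {K : Type*} [Field K] [NeZero (2 : K)]
    {C : Matrix ι ι K} (h : IsQuadrupleBalanced C) (hC : C.IsSymm) : ∃ u, IsPotential C u := by
  classical
  rcases isEmpty_or_nonempty ι with _ | ⟨⟨p⟩⟩
  · exact ⟨0, fun i => isEmptyElim i⟩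
  -- Balancedness of `a, b, c, p` says that this defect does not depend on `b`.
  let defect (a b : {x // x ≠ p}) : K := C a b - C a p - C b p
  obtain ⟨κ, hκ⟩ : ∃ κ, Pairwise fun a b => defect a b = κ := by
    refine exists_pairwise_eq_of_symm (fun a b => ?_) fun a b c hd => ?_
    · simp only [defect]
      linear_combination hC.apply (b : ι) a
    · have hquad : [(a : ι), b, c, p].Nodup := by
        simpa [a.2, b.2, c.2, Subtype.ext_iff] using hd
      simp only [defect]
      linear_combination h hquad
  have two_ne : (2 : K) ≠ 0 := two_ne_zero
  refine ⟨Function.update (fun a => C a p + κ / 2) p (-κ / 2), fun a b hab => ?_⟩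
  rcases eq_or_ne a p with rfl | ha
  · rw [Function.update_self, Function.update_of_ne hab.symm, hC.apply b a]
    ring
  rcases eq_or_ne b p with rfl | hb
  · rw [Function.update_self, Function.update_of_ne ha]
    ring
  have hdefect : C a b - C a p - C b p = κ := @hκ ⟨a, ha⟩ ⟨b, hb⟩ (by simpa using hab)
  rw [Function.update_of_ne ha, Function.update_of_ne hb]
  field_simp
  linear_combination 2 * hdefect

variable [Fintype ι] [DecidableEq ι]

theorem IsPotential.sum_erase {R : Type*} [CommRing R] {C : Matrix ι ι R} {u : ι → R}
    (hu : IsPotential C u) (i : ι) :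
    ∑ j ∈ univ.erase i, C i j = (Fintype.card ι - 2) * u i + ∑ j, u j := by
  calc ∑ j ∈ univ.erase i, C i j = ∑ j ∈ univ.erase i, (u i + u j) :=
        sum_congr rfl fun j hj => hu (ne_of_mem_erase hj).symm
    _ = (Fintype.card ι - 1) * u i + (∑ j, u j - u i) := by
        rw [sum_add_distrib, sum_const, nsmul_eq_mul, cast_card_erase_of_mem (mem_univ i),
          card_univ, sum_erase_eq_sub (mem_univ i)]
    _ = (Fintype.card ι - 2) * u i + ∑ j, u j := by ring

theorem exists_isPotential_sum_eq_zero_iff {K : Type*} [Field K] {C : Matrix ι ι K}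
    (hcard : (Fintype.card ι : K) ≠ 2) :
    (∃ u, IsPotential C u ∧ ∑ i, u i = 0) ↔
      Pairwise fun i j => C i j =
        (∑ k ∈ univ.erase i, C i k + ∑ k ∈ univ.erase j, C j k) / (Fintype.card ι - 2) := by
  have hne : (Fintype.card ι : K) - 2 ≠ 0 := sub_ne_zero.2 hcard
  constructor
  · rintro ⟨u, hu, hsum⟩ i j hij
    rw [hu.sum_erase, hu.sum_erase, hsum, hu hij]
    field_simp
    ring
  · intro h
    let u i := (∑ k ∈ univ.erase i, C i k) / (Fintype.card ι - 2 : K)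
    have hu : IsPotential C u := fun i j hij => (h hij).trans (add_div _ _ _)
    refine ⟨u, hu, ?_⟩
    rcases isEmpty_or_nonempty ι with _ | ⟨⟨i⟩⟩
    · simp
    have hrow : ∑ k ∈ univ.erase i, C i k = (Fintype.card ι - 2) * u i :=
      (mul_div_cancel₀ _ hne).symm
    linear_combination hrow - hu.sum_erase i

end Potential

section InnerProduct

variable {n : ℕ} {C : Matrix (Fin n) (Fin n) ℝ}

theorem innerH_sub (S A B : Matrix (Fin n) (Fin n) ℝ) :
    innerH S (A - B) = innerH S A - innerH S B := by
  simp only [innerH, Matrix.sub_apply, mul_sub, sum_sub_distrib]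

theorem innerH_adjR (hC : C.IsSymm) (i : Fin n) :
    innerH (adjR i) C = ∑ j ∈ univ.erase i, C i j := by
  have entry : ∀ k l, adjR i k l * C k l =
      (if k = i then if l ≠ i then C i l else 0 else 0) +
        (if l = i then if k ≠ i then C i k else 0 else 0) := fun k l => by
    have hki := hC.apply i k
    simp only [adjR, Matrix.of_apply]
    grind
  simp only [innerH, entry, sum_add_distrib, sum_ite_eq', sum_ite_irrel, mem_univ, if_true,
    sum_const_zero, ← sum_filter, filter_ne']
  ring

theorem innerH_permMatrix (σ : Equiv.Perm (Fin n)) (C : Matrix (Fin n) (Fin n) ℝ) :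
    innerH (σ.permMatrix ℝ) C = (1 / 2) * ∑ i, C i (σ i) := by
  simp [innerH, Equiv.Perm.permMatrix, PEquiv.toMatrix_apply]

theorem IsPotential.innerH_eq_sum {u : Fin n → ℝ} (hu : IsPotential C u)
    {S : Matrix (Fin n) (Fin n) ℝ} (hS : IsPairing S) : innerH S C = ∑ i, u i := by
  obtain ⟨symm, diag_eq_zero, -, row_sum⟩ := hS
  have entry : ∀ i j, S i j * C i j = S i j * u i + S j i * u j := fun i j => by
    rcases eq_or_ne i j with rfl | hij
    · simp [diag_eq_zero]
    · rw [hu hij, symm.apply, mul_add]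
  have weighted : ∑ i, ∑ j, S i j * u i = ∑ i, u i := by
    simp only [← sum_mul, row_sum, one_mul]
  simp only [innerH, entry, sum_add_distrib]
  rw [sum_comm (f := fun i j => S j i * u j), weighted]
  ring

theorem isQuadrupleBalanced_of_forall_innerH_eq_zero (hC : C.IsSymm) (he : Even n)
    (h : ∀ S, IsPairing S → innerH S C = 0) : IsQuadrupleBalanced C := by
  intro a b c d hd
  obtain ⟨σ, hσ, rfl, rfl⟩ :=
    IsFixedPointFreeInvolution.exists_apply_eq_apply_eq (by rwa [Fintype.card_fin]) hd
  have sum_eq_zero : ∀ τ : Equiv.Perm (Fin n), IsFixedPointFreeInvolution τ →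
      ∑ i, C i (τ i) = 0 := fun τ hτ => by
    simpa [innerH_permMatrix] using h _ hτ.isPairing_permMatrix
  have exchange := hσ.sum_apply_sub_sum_permCongr_swap_apply hC (a := a) (c := c)
    (by grind) (by grind)
  rw [sum_eq_zero σ hσ, sum_eq_zero _ (hσ.permCongr _)] at exchange
  linarith

theorem forall_innerH_eq_zero_iff_exists_isPotential (hC : C.IsSymm) (he : Even n) :
    (∀ S, IsPairing S → innerH S C = 0) ↔ ∃ u, IsPotential C u ∧ ∑ i, u i = 0 := by
  constructor
  · intro h
    obtain ⟨u, hu⟩ := (isQuadrupleBalanced_of_forall_innerH_eq_zero hC he h).exists_isPotential hC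
    obtain ⟨σ, hσ⟩ := IsFixedPointFreeInvolution.exists_of_even_card (ι := Fin n)
      (by rwa [Fintype.card_fin])
    have hS := hσ.isPairing_permMatrix
    exact ⟨u, hu, (hu.innerH_eq_sum hS).symm.trans (h _ hS)⟩
  · rintro ⟨u, hu, hsum⟩ S hS
    rw [hu.innerH_eq_sum hS, hsum]

theorem exists_isPotential_sum_eq_zero_iff_forall_lt (hC : C.IsSymm) (hn : n ≠ 2) :
    (∃ u, IsPotential C u ∧ ∑ i, u i = 0) ↔
      ∀ i j, i < j → C i j = (innerH (adjR i) C + innerH (adjR j) C) / ((n : ℝ) - 2) := by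
  have hcard : (Fintype.card (Fin n) : ℝ) ≠ 2 := by
    rw [Fintype.card_fin]
    exact_mod_cast hn
  have : Std.Symm fun i j => C i j = (innerH (adjR i) C + innerH (adjR j) C) / ((n : ℝ) - 2) :=
    ⟨fun i j h => by rw [hC.apply i j, h, add_comm]⟩
  rw [exists_isPotential_sum_eq_zero_iff hcard, Fintype.card_fin, ← pairwise_iff_lt]
  simp only [innerH_adjR hC]

end InnerProduct

theorem stmt5_general (n : ℕ) (hn : n ≠ 2) (he : Even n) (A B : Matrix (Fin n) (Fin n) ℝ)
    (hAB : (A - B).IsSymm) :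
    (∀ S, IsPairing S → innerH S A = innerH S B) ↔
      ∀ i j : Fin n, i < j →
        A i j - (innerH (adjR i) A + innerH (adjR j) A) / ((n : ℝ) - 2)
          = B i j - (innerH (adjR i) B + innerH (adjR j) B) / ((n : ℝ) - 2) := by
  calc (∀ S, IsPairing S → innerH S A = innerH S B)
    _ ↔ ∀ S, IsPairing S → innerH S (A - B) = 0 := by simp only [innerH_sub, sub_eq_zero]
    _ ↔ ∃ u, IsPotential (A - B) u ∧ ∑ i, u i = 0 :=
      forall_innerH_eq_zero_iff_exists_isPotential hAB he
    _ ↔ ∀ i j : Fin n, i < j → (A - B) i j =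
          (innerH (adjR i) (A - B) + innerH (adjR j) (A - B)) / ((n : ℝ) - 2) :=
      exists_isPotential_sum_eq_zero_iff_forall_lt hAB hn
    _ ↔ _ := by
      refine forall₃_congr fun i j _ => ?_
      rw [Matrix.sub_apply, innerH_sub, innerH_sub]
      constructor <;> intro h <;> linear_combination h

theorem stmt5 (n : ℕ) (hn : 4 ≤ n) (he : Even n) (A B : Matrix (Fin n) (Fin n) ℝ)
    (hA : hollowSym A) (hB : hollowSym B) :
    (∀ S, IsPairing S → innerH S A = innerH S B) ↔
      ∀ i j : Fin n, i < j →
        A i j - (innerH (adjR i) A + innerH (adjR j) A) / ((n : ℝ) - 2)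
          = B i j - (innerH (adjR i) B + innerH (adjR j) B) / ((n : ℝ) - 2) :=
  stmt5_general n (by lia) he A B (hA.1.sub hB.1)
end
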